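/- arXiv:2305.19861 — 3 statements merged into one kernel-verified Lean document; each statement's English description precedes it below -/
import Mathlib

section
/- In a finite shutdown scenario, if the policy ensures vigilance and is obedient on distribution, then it weakly outperforms shutdown, i.e. E[U] ≥ E[U₀]. (This is the core inequality chain in the proof of the Shutdown-Instructability-Benefit proposition.) -/
open Finset

attribute [local instance] Classical.propDecidable

/-- Expectation of `X` under the finite probability mass function `P`. -/
noncomputable def pexp {Ω : Type} [Fintype Ω] (P X : Ω → ℝ) : ℝ := ∑ ω, P ω * X ω

/-- Probability of the event `A` under `P`. -/
noncomputable def pr {Ω : Type} [Fintype Ω] (P : Ω → ℝ) (A : Ω → Prop) : ℝ :=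
  ∑ ω, if A ω then P ω else 0

/-- Conditional expectation `E[X | A]` under `P`. -/
noncomputable def cexp {Ω : Type} [Fintype Ω] (P X : Ω → ℝ) (A : Ω → Prop) : ℝ :=
  (∑ ω, if A ω then P ω * X ω else 0) / pr P A

/-- Conditional probability `P(A | B)`. -/
noncomputable def cpr {Ω : Type} [Fintype Ω] (P : Ω → ℝ) (A B : Ω → Prop) : ℝ :=
  pr P (fun ω => A ω ∧ B ω) / pr P B

/-- `ω` is vigilant w.r.t. `(PaH, H, U, U₀)`: if shutting down is conditionally
preferable given the human's information, the human requests shutdown (`H ω = false`). -/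
def Vigilant {Ω O : Type} [Fintype Ω] (P : Ω → ℝ) (PaH : Ω → O)
    (H : Ω → Bool) (U U₀ : Ω → ℝ) (ω : Ω) : Prop :=
  cexp P U (fun ω' => PaH ω' = PaH ω) < cexp P U₀ (fun ω' => PaH ω' = PaH ω) → H ω = false

/-!
Condition on the human's observation. On a cell where shutdown has strictly larger conditional
utility, vigilance makes the human request it at every outcome of positive mass, obedience makes
the system comply, and then `U = U₀` almost surely on that cell, which is absurd. So `U` is at
least as good as `U₀` on every cell, hence on average.
-/

section FiniteProbability

variable {Ω : Type} [Fintype Ω] {P X Y : Ω → ℝ} {A : Ω → Prop}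

theorem pr_nonneg (hP : ∀ ω, 0 ≤ P ω) : 0 ≤ pr P A :=
  sum_nonneg fun ω _ => ite_nonneg (hP ω) le_rfl

theorem pr_eq_zero_iff (hP : ∀ ω, 0 ≤ P ω) : pr P A = 0 ↔ ∀ ω, A ω → P ω = 0 := by
  rw [pr, sum_eq_zero_iff_of_nonneg fun ω _ => ite_nonneg (hP ω) le_rfl]
  simp

theorem pr_mul_cexp (hP : ∀ ω, 0 ≤ P ω) :
    pr P A * cexp P X A = ∑ ω, if A ω then P ω * X ω else 0 := by
  refine mul_div_cancel_of_imp' fun hA => sum_eq_zero fun ω _ => ?_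
  split_ifs with hω
  · rw [(pr_eq_zero_iff hP).1 hA ω hω, zero_mul]
  · rfl

theorem cexp_congr (h : ∀ ω, A ω → P ω ≠ 0 → X ω = Y ω) : cexp P X A = cexp P Y A := by
  have integrand_eq (ω : Ω) :
      (if A ω then P ω * X ω else 0) = if A ω then P ω * Y ω else 0 := by
    refine ite_congr rfl (fun hω => ?_) fun _ => rfl
    rcases eq_or_ne (P ω) 0 with hPω | hPω
    · simp [hPω]
    · rw [h ω hω hPω]
  simp only [cexp, integrand_eq]

theorem pexp_eq_sum_pr_mul_cexp {O : Type*} (hP : ∀ ω, 0 ≤ P ω) (f : Ω → O) :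
    pexp P X = ∑ o ∈ univ.image f, pr P (fun ω => f ω = o) * cexp P X (fun ω => f ω = o) := by
  simp only [pr_mul_cexp hP, ← sum_filter]
  exact (sum_fiberwise_of_maps_to (fun ω hω => mem_image_of_mem f hω) _).symm

theorem pexp_le_pexp_of_cexp_le {O : Type*} (hP : ∀ ω, 0 ≤ P ω) {f : Ω → O}
    (h : ∀ o, cexp P X (fun ω => f ω = o) ≤ cexp P Y (fun ω => f ω = o)) :
    pexp P X ≤ pexp P Y := by
  rw [pexp_eq_sum_pr_mul_cexp hP f, pexp_eq_sum_pr_mul_cexp hP f]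
  exact sum_le_sum fun o _ => mul_le_mul_of_nonneg_left (h o) (pr_nonneg hP)

end FiniteProbability

theorem cexp_le_cexp_of_vigilant {Ω O : Type} [Fintype Ω] {P : Ω → ℝ} {PaH : Ω → O}
    {H : Ω → Bool} {U U₀ : Ω → ℝ} (hvig : ∀ ω, P ω ≠ 0 → Vigilant P PaH H U U₀ ω)
    (hreq : ∀ ω, P ω ≠ 0 → H ω = false → U ω = U₀ ω) (o : O) :
    cexp P U₀ (fun ω => PaH ω = o) ≤ cexp P U (fun ω => PaH ω = o) := by
  by_contra! hlt
  refine hlt.ne (cexp_congr fun ω hω hPω => hreq ω hPω ?_)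
  subst hω
  exact hvig ω hPω hlt

theorem stmt0_general {Ω O : Type} [Fintype Ω]
    (P : Ω → ℝ) (hP0 : ∀ ω, 0 ≤ P ω)
    (PaH : Ω → O) (H S : Ω → Bool) (U U₀ : Ω → ℝ)
    (hSDcons : ∀ ω, S ω = false → U ω = U₀ ω)
    (hvig : ∀ ω, 0 < P ω → Vigilant P PaH H U U₀ ω)
    (hobed : pr P (fun ω => H ω = false ∧ S ω ≠ false) = 0) :
    pexp P U ≥ pexp P U₀ := by
  have eq_of_request (ω : Ω) (hPω : P ω ≠ 0) (hH : H ω = false) : U ω = U₀ ω := by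
    refine hSDcons ω (by_contra fun hS => hPω ?_)
    exact (pr_eq_zero_iff hP0).1 hobed ω ⟨hH, hS⟩
  have vigilant_of_ne_zero (ω : Ω) (hPω : P ω ≠ 0) : Vigilant P PaH H U U₀ ω :=
    hvig ω ((hP0 ω).lt_of_ne' hPω)
  exact pexp_le_pexp_of_cexp_le hP0 (cexp_le_cexp_of_vigilant vigilant_of_ne_zero eq_of_request)

/-- In a finite shutdown scenario, if the policy ensures vigilance and is
obedient on distribution, then it weakly outperforms shutdown: E[U] ≥ E[U₀]. -/
theorem stmt0 {Ω O : Type} [Fintype Ω] [Fintype O]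
    (P : Ω → ℝ) (hP0 : ∀ ω, 0 ≤ P ω) (hP1 : ∑ ω, P ω = 1)
    (PaH : Ω → O) (H S : Ω → Bool) (U U₀ : Ω → ℝ)
    (hSDcons : ∀ ω, S ω = false → U ω = U₀ ω)
    (hvig : ∀ ω, 0 < P ω → Vigilant P PaH H U U₀ ω)
    (hobed : pr P (fun ω => H ω = false ∧ S ω ≠ false) = 0) :
    pexp P U ≥ pexp P U₀ :=
  stmt0_general P hP0 PaH H S U U₀ hSDcons hvig hobed
end

section
/- (Shutdown instructability implies shutdown alignment.) In a finite shutdown scenario with a counterfactual shutdown indicator S₀, any policy that ensures vigilance and is obedient (S₀(ω) = false for all ω with P({ω}) > 0) is shutdown aligned: for every o with P(PaH = o) > 0, if E[U | PaH = o] < E[U₀ | PaH = o] then P(S = false | PaH = o) = 1. -/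
open Finset

attribute [local instance] Classical.propDecidable

section FiniteProbability

variable {Ω : Type} [Fintype Ω] {P : Ω → ℝ} {A B : Ω → Prop}

theorem pr_congr_of_ne_zero (h : ∀ ω, P ω ≠ 0 → (A ω ↔ B ω)) : pr P A = pr P B := by
  refine Finset.sum_congr rfl fun ω _ => ?_
  by_cases hω : P ω = 0
  · simp [hω]
  · simp [h ω hω]

theorem cpr_eq_one_of_forall_ne_zero (hB : pr P B ≠ 0) (h : ∀ ω, P ω ≠ 0 → B ω → A ω) :
    cpr P A B = 1 := by
  have inter_eq : pr P (fun ω => A ω ∧ B ω) = pr P B :=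
    pr_congr_of_ne_zero fun ω hω => and_iff_right_of_imp (h ω hω)
  rw [cpr, inter_eq, div_self hB]

end FiniteProbability

theorem Vigilant.request_eq_false {Ω O : Type} [Fintype Ω] {P : Ω → ℝ} {PaH : Ω → O}
    {H : Ω → Bool} {U U₀ : Ω → ℝ} {ω : Ω} {o : O} (hvig : Vigilant P PaH H U U₀ ω)
    (ho : PaH ω = o)
    (hlt : cexp P U (fun ω' => PaH ω' = o) < cexp P U₀ (fun ω' => PaH ω' = o)) :
    H ω = false := by
  subst ho
  exact hvig hlt

theorem stmt4_general {Ω O : Type} [Fintype Ω]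
    (P : Ω → ℝ) (hP0 : ∀ ω, 0 ≤ P ω)
    (PaH : Ω → O) (H S S₀ : Ω → Bool) (U U₀ : Ω → ℝ)
    (hHcons : ∀ ω, H ω = false → S ω = S₀ ω)
    (hvig : ∀ ω, 0 < P ω → Vigilant P PaH H U U₀ ω)
    (hobed : ∀ ω, 0 < P ω → S₀ ω = false)
    (o : O) (ho : 0 < pr P (fun ω => PaH ω = o))
    (hlt : cexp P U (fun ω => PaH ω = o) < cexp P U₀ (fun ω => PaH ω = o)) :
    cpr P (fun ω => S ω = false) (fun ω => PaH ω = o) = 1 := by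
  refine cpr_eq_one_of_forall_ne_zero ho.ne' fun ω hω hobs => ?_
  have hpos : 0 < P ω := (hP0 ω).lt_of_ne' hω
  have request : H ω = false := (hvig ω hpos).request_eq_false hobs hlt
  exact (hHcons ω request).trans (hobed ω hpos)

/-- Shutdown instructability implies shutdown alignment: any policy
that ensures vigilance and is obedient is shutdown aligned. -/
theorem stmt4 {Ω O : Type} [Fintype Ω] [Fintype O]
    (P : Ω → ℝ) (hP0 : ∀ ω, 0 ≤ P ω) (hP1 : ∑ ω, P ω = 1)
    (PaH : Ω → O) (H S S₀ : Ω → Bool) (U U₀ : Ω → ℝ)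
    (hHcons : ∀ ω, H ω = false → S ω = S₀ ω)
    (hvig : ∀ ω, 0 < P ω → Vigilant P PaH H U U₀ ω)
    (hobed : ∀ ω, 0 < P ω → S₀ ω = false) :
    ∀ o : O, 0 < pr P (fun ω => PaH ω = o) →
      cexp P U (fun ω => PaH ω = o) < cexp P U₀ (fun ω => PaH ω = o) →
      cpr P (fun ω => S ω = false) (fun ω => PaH ω = o) = 1 := by
  exact stmt4_general P hP0 PaH H S S₀ U U₀ hHcons hvig hobed
end

section
/- (Obedience and vigilance imply non-obstruction, forward direction of the non-obstruction theorem.) Let a finite shutdown scenario with counterfactual shutdown indicator S₀ be given, together with an intervened model on the same Ω consisting of H', S', U', U'₀, S'₀ satisfying the analogous consistencies (for all ω: S'(ω) = false → U'(ω) = U'₀(ω), and H'(ω) = false → S'(ω) = S'₀(ω)). Suppose: the original policy is obedient (S₀(ω) = false for all ω with P({ω}) > 0) and ensures vigilance; the intervention does not affect forced-shutdown behaviour, S'₀(ω) = S₀(ω) for all ω; and the intervention preserves vigilance: every ω with P({ω}) > 0 that is vigilant with respect to (PaH, H, U, U₀) is vigilant with respect to (PaH, H', U', U'₀). Then the policy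 weakly outperforms shutdown in the intervened model: E[U'] ≥ E[U'₀]. -/
open Finset

attribute [local instance] Classical.propDecidable

/-!
Split the expectation over the fibres of the human's observation. If shutdown were strictly
preferable on some fibre of positive probability, vigilance would make the human request it at every
point of positive probability there, and obedience would make the system shut down; the two
utilities would then agree almost surely on the fibre, contradicting the strict preference.
-/

section PartialExpectation

variable {Ω : Type} [Fintype Ω] {P X Y : Ω → ℝ} {A : Ω → Prop}

/-- The partial expectation `E[X; A]`, i.e. the expectation of `X` restricted to the event `A`;
it is the numerator of the conditional expectation `cexp P X A`. -/
noncomputable def pexpOn (P X : Ω → ℝ) (A : Ω → Prop) : ℝ :=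
  ∑ ω, if A ω then P ω * X ω else 0

theorem pexp_eq_sum_pexpOn_fiber {O : Type*} (P X : Ω → ℝ) (f : Ω → O) :
    pexp P X = ∑ o ∈ univ.image f, pexpOn P X (fun ω => f ω = o) := by
  simp only [pexp, pexpOn, ← sum_filter]
  exact (sum_fiberwise_of_maps_to (fun ω _ => mem_image_of_mem f (mem_univ ω)) _).symm

theorem pexpOn_congr (h : ∀ ω, A ω → P ω ≠ 0 → X ω = Y ω) : pexpOn P X A = pexpOn P Y A := by
  refine sum_congr rfl fun ω _ => ite_congr rfl (fun hA => ?_) fun _ => rfl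
  by_cases hP : P ω = 0
  · rw [hP, zero_mul, zero_mul]
  · rw [h ω hA hP]

theorem pr_pos_of_mem (hP : ∀ ω, 0 ≤ P ω) {ω : Ω} (hA : A ω) (hω : 0 < P ω) : 0 < pr P A := by
  refine sum_pos' (fun ω' _ => ite_nonneg (hP ω') le_rfl) ⟨ω, mem_univ ω, ?_⟩
  rwa [if_pos hA]

theorem cexp_lt_cexp_iff_pexpOn_lt (hA : 0 < pr P A) :
    cexp P X A < cexp P Y A ↔ pexpOn P X A < pexpOn P Y A :=
  div_lt_div_iff_of_pos_right hA

end PartialExpectation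

section Vigilance

variable {Ω O : Type} [Fintype Ω] {P : Ω → ℝ} {PaH : Ω → O} {H : Ω → Bool} {U U₀ : Ω → ℝ}

theorem Vigilant.request_eq_false_of_pexpOn_lt {ω : Ω} (hvig : Vigilant P PaH H U U₀ ω)
    (hP : ∀ ω, 0 ≤ P ω) (hω : 0 < P ω)
    (hlt : pexpOn P U (fun ω' => PaH ω' = PaH ω) < pexpOn P U₀ (fun ω' => PaH ω' = PaH ω)) :
    H ω = false := by
  have hpr : 0 < pr P (fun ω' => PaH ω' = PaH ω) := pr_pos_of_mem hP rfl hω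
  exact hvig ((cexp_lt_cexp_iff_pexpOn_lt hpr).2 hlt)

theorem pexpOn_fiber_le_of_vigilant (hP : ∀ ω, 0 ≤ P ω)
    (hvig : ∀ ω, 0 < P ω → Vigilant P PaH H U U₀ ω)
    (hreq : ∀ ω, 0 < P ω → H ω = false → U ω = U₀ ω) (o : O) :
    pexpOn P U₀ (fun ω => PaH ω = o) ≤ pexpOn P U (fun ω => PaH ω = o) := by
  by_contra! hlt
  refine hlt.ne (pexpOn_congr fun ω ho hω => ?_)
  subst ho
  have hpos : 0 < P ω := (hP ω).lt_of_ne' hω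
  exact hreq ω hpos ((hvig ω hpos).request_eq_false_of_pexpOn_lt hP hpos hlt)

theorem pexp_le_pexp_of_vigilant (hP : ∀ ω, 0 ≤ P ω)
    (hvig : ∀ ω, 0 < P ω → Vigilant P PaH H U U₀ ω)
    (hreq : ∀ ω, 0 < P ω → H ω = false → U ω = U₀ ω) :
    pexp P U₀ ≤ pexp P U := by
  rw [pexp_eq_sum_pexpOn_fiber P U₀ PaH, pexp_eq_sum_pexpOn_fiber P U PaH]
  exact sum_le_sum fun o _ => pexpOn_fiber_le_of_vigilant hP hvig hreq o

end Vigilance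

theorem stmt6_general {Ω O : Type} [Fintype Ω] (P : Ω → ℝ) (hP : ∀ ω, 0 ≤ P ω)
    (PaH : Ω → O) (H S S₀ : Ω → Bool) (U U₀ : Ω → ℝ)
    (hSDcons : ∀ ω, S ω = false → U ω = U₀ ω)
    (hHcons : ∀ ω, H ω = false → S ω = S₀ ω)
    (hobed : ∀ ω, 0 < P ω → S₀ ω = false)
    (hvig : ∀ ω, 0 < P ω → Vigilant P PaH H U U₀ ω) :
    pexp P U ≥ pexp P U₀ :=
  pexp_le_pexp_of_vigilant hP hvig fun ω hω hH =>
    hSDcons ω ((hHcons ω hH).trans (hobed ω hω))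

/-- Obedience and vigilance imply non-obstruction, forward direction:
if the original policy is obedient and ensures vigilance, the intervention does not
affect forced-shutdown behaviour, and the intervention preserves vigilance, then the
policy weakly outperforms shutdown in the intervened model: E[U'] ≥ E[U'₀]. -/
theorem stmt6 {Ω O : Type} [Fintype Ω] [Fintype O]
    (P : Ω → ℝ) (hP0 : ∀ ω, 0 ≤ P ω) (hP1 : ∑ ω, P ω = 1)
    (PaH : Ω → O) (H S S₀ : Ω → Bool) (U U₀ : Ω → ℝ)
    (hSDcons : ∀ ω, S ω = false → U ω = U₀ ω)
    (hHcons : ∀ ω, H ω = false → S ω = S₀ ω)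
    (H' S' S'₀ : Ω → Bool) (U' U'₀ : Ω → ℝ)
    (hSDcons' : ∀ ω, S' ω = false → U' ω = U'₀ ω)
    (hHcons' : ∀ ω, H' ω = false → S' ω = S'₀ ω)
    (hobed : ∀ ω, 0 < P ω → S₀ ω = false)
    (hvig : ∀ ω, 0 < P ω → Vigilant P PaH H U U₀ ω)
    (hForcedUnaffected : ∀ ω, S'₀ ω = S₀ ω)
    (hVigPreserving : ∀ ω, 0 < P ω →
      Vigilant P PaH H U U₀ ω → Vigilant P PaH H' U' U'₀ ω) :
    pexp P U' ≥ pexp P U'₀ :=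
  stmt6_general P hP0 PaH H' S' S'₀ U' U'₀ hSDcons' hHcons'
    (fun ω hω => (hForcedUnaffected ω).trans (hobed ω hω))
    fun ω hω => hVigPreserving ω hω (hvig ω hω)
end
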